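/- For a partition $\Lambda$ with at most $n+1$ parts, the Schur polynomial satisfies the branching rule $s_\Lambda(x_1,\ldots,x_n,x_{n+1}) = \sum_{M} x_{n+1}^{|\Lambda| - |M|} s_M(x_1,\ldots,x_n)$, where the sum runs over all partitions $M$ with at most $n$ parts such that $\Lambda/M$ is a horizontal strip. -/

import Mathlib

/- STATEMENT 1: Branching rule for Schur polynomials: for a partition Λ with at most n+1
   parts, s_Λ(x₁,…,x_{n+1}) = ∑_M x_{n+1}^{|Λ|-|M|} s_M(x₁,…,xₙ), the sum over partitions
   M with at most n parts such that Λ/M is a horizontal strip (λᵢ ≥ μᵢ ≥ λ_{i+1}).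

   Schur polynomials are defined by the Jacobi–Trudi formula
   s_Λ = det(h_{λᵢ - i + j})_{1≤i,j≤ℓ}, where h_k is the complete homogeneous symmetric
   polynomial (of the chosen set S of variables) and h_k = 0 for k < 0. -/

noncomputable section
open MvPolynomial

/-- The complete homogeneous symmetric polynomial of degree `k` in the variables `Xᵢ`,
`i ∈ S`. -/
def hCompl (N : ℕ) (S : Finset (Fin N)) (k : ℕ) : MvPolynomial (Fin N) ℚ :=
  ∑ d ∈ (Finset.Icc (fun _ => 0) (fun i => if i ∈ S then k else 0) :
      Finset (Fin N → ℕ)).filter (fun d => ∑ i, d i = k),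
    ∏ i, (X i) ^ d i

/-- `h_m` for `m ∈ ℤ`, with `h_m = 0` for `m < 0`. -/
def hComplZ (N : ℕ) (S : Finset (Fin N)) (m : ℤ) : MvPolynomial (Fin N) ℚ :=
  if 0 ≤ m then hCompl N S m.toNat else 0

/-- The Schur polynomial of a partition `Λ` (given by its `l` parts) in the variables
`Xᵢ, i ∈ S`, via the Jacobi–Trudi determinant. -/
def schurJT (N : ℕ) (S : Finset (Fin N)) {l : ℕ} (Λ : Fin l → ℕ) : MvPolynomial (Fin N) ℚ :=
  Matrix.det (Matrix.of fun i j : Fin l => hComplZ N S ((Λ i : ℤ) + (j : ℤ) - (i : ℤ)))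

/- Put `y = x_{n+1}`. The complete homogeneous polynomials `h` in all variables and `g` without `y`
satisfy `h_m = y h_{m-1} + g_m`, so multiplying their generating series by `∏ (1 - xᵢ t)` over
`i ≤ n` leaves `1 / (1 - y t)`. Column operations with the coefficients of this product therefore
turn the last column of the Jacobi–Trudi matrix of `Λ` into the powers `y ^ (λᵢ + n + 1 - i)`.
Subtracting `y ^ (λᵢ - λᵢ₊₁ + 1)` times the next row then clears that column except for its bottom
entry, while in the other columns the recurrence telescopes to a sum of `y ^ (λᵢ - μ) g_{μ - i + j}`
over `λᵢ₊₁ ≤ μ ≤ λᵢ`. Expanding the remaining determinant row by row yields the sum over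
horizontal strips. -/

section Determinant

variable {R : Type*} [CommRing R] {n : ℕ}

lemma det_eq_of_forall_row_eq_smul_add_succ {A B : Matrix (Fin (n + 1)) (Fin (n + 1)) R}
    (c : Fin n → R) (hlast : ∀ j, A (Fin.last n) j = B (Fin.last n) j)
    (hcastSucc : ∀ i j, A i.castSucc j = B i.castSucc j + c i * A i.succ j) :
    A.det = B.det := by
  rw [← Matrix.det_submatrix_equiv_self Fin.revPerm A,
    ← Matrix.det_submatrix_equiv_self Fin.revPerm B]
  refine Matrix.det_eq_of_forall_row_eq_smul_add_pred (fun i => c i.rev) (fun j => ?_)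
    fun i j => ?_
  · simp [hlast]
  · simp [Fin.rev_succ, Fin.rev_castSucc, hcastSucc]

lemma det_eq_mul_det_of_last_col_eq_zero (A : Matrix (Fin (n + 1)) (Fin (n + 1)) R)
    (hA : ∀ i : Fin n, A i.castSucc (Fin.last n) = 0) :
    A.det = A (Fin.last n) (Fin.last n) * (A.submatrix Fin.castSucc Fin.castSucc).det := by
  rw [Matrix.det_succ_column A (Fin.last n), Fin.sum_univ_castSucc,
    Finset.sum_eq_zero fun i _ => by simp [hA i], zero_add]
  simp [← two_mul, Fin.succAbove_last]

lemma det_eq_mul_det_of_last_col_eq_mul_succ (A : Matrix (Fin (n + 1)) (Fin (n + 1)) R)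
    (c : Fin n → R)
    (hA : ∀ i : Fin n, A i.castSucc (Fin.last n) = c i * A i.succ (Fin.last n)) :
    A.det = A (Fin.last n) (Fin.last n) *
      (Matrix.of fun i j : Fin n =>
        A i.castSucc j.castSucc - c i * A i.succ j.castSucc).det := by
  let B : Matrix (Fin (n + 1)) (Fin (n + 1)) R :=
    Fin.snoc (α := fun _ => Fin (n + 1) → R) (fun i => A i.castSucc - c i • A i.succ)
      (A (Fin.last n))
  have hlast (j) : B (Fin.last n) j = A (Fin.last n) j := by simp [B]
  have hcast (i : Fin n) (j) : B i.castSucc j = A i.castSucc j - c i * A i.succ j := by simp [B]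
  rw [det_eq_of_forall_row_eq_smul_add_succ (B := B) c (by simp [hlast]) (by simp [hcast]),
    det_eq_mul_det_of_last_col_eq_zero B (by simp [hcast, hA]), hlast]
  congr 2
  ext i j
  exact hcast i j.castSucc

lemma det_of_sum_row {ι κ : Type*} [Fintype ι] [DecidableEq ι] (s : ι → Finset κ)
    (f : ι → κ → ι → R) :
    (Matrix.of fun i j => ∑ k ∈ s i, f i k j).det =
      ∑ p ∈ Fintype.piFinset s, (Matrix.of fun i j => f i (p i) j).det := by
  have h := (Matrix.detRowAlternating (n := ι) (R := R)).toMultilinearMap.map_sum_finset f s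
  refine Eq.trans (congrArg Matrix.det ?_) h
  ext i j
  simp

end Determinant

section Shift

variable (R : Type*) [CommRing R]

/-- The shift operator `h ↦ (m ↦ h (m - 1))` on two-sided sequences. It encodes multiplication of
the generating series `∑ h_m t ^ m` by `t`, so that `Polynomial.aeval (shift R) P` encodes
multiplication by `P(t)`. -/
def shift : Module.End R (ℤ → R) :=
  LinearMap.funLeft R R (· - 1)

variable {R}

@[simp]
lemma shift_apply (h : ℤ → R) (m : ℤ) : shift R h m = h (m - 1) :=
  rfl

lemma shift_pow_apply (k : ℕ) (h : ℤ → R) (m : ℤ) : (shift R ^ k) h m = h (m - k) := by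
  induction k generalizing m with
  | zero => simp
  | succ k ih =>
    rw [pow_succ', Module.End.mul_apply, shift_apply, ih]
    push_cast
    ring_nf

lemma aeval_shift_apply {P : Polynomial R} {d : ℕ} (hP : P.natDegree ≤ d) (h : ℤ → R) (m : ℤ) :
    Polynomial.aeval (shift R) P h m = ∑ k : Fin (d + 1), P.coeff k * h (m - (k : ℕ)) := by
  rw [Polynomial.aeval_eq_sum_range' (Nat.lt_succ_of_le hP), Finset.sum_range]
  simp [shift_pow_apply]

lemma aeval_shift_one_sub_C_mul_X_apply (y : R) (h : ℤ → R) (m : ℤ) :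
    Polynomial.aeval (shift R) (1 - Polynomial.C y * Polynomial.X) h m =
      h m - y * h (m - 1) := by
  simp [Module.algebraMap_end_apply]

end Shift

section JacobiTrudi

variable {R : Type*} {n : ℕ}

/-- The Jacobi–Trudi matrix `(h_{λᵢ - i + j})` of an arbitrary sequence `h` in place of the
complete homogeneous symmetric polynomials. -/
def jacobiTrudi {l : ℕ} (h : ℤ → R) (Λ : Fin l → ℕ) : Matrix (Fin l) (Fin l) R :=
  Matrix.of fun i j => h ((Λ i : ℤ) + (j : ℤ) - (i : ℤ))

@[simp]
lemma jacobiTrudi_apply {l : ℕ} (h : ℤ → R) (Λ : Fin l → ℕ) (i j : Fin l) :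
    jacobiTrudi h Λ i j = h ((Λ i : ℤ) + (j : ℤ) - (i : ℤ)) :=
  rfl

variable [CommRing R]

lemma det_updateCol_last_jacobiTrudi_aeval_shift {P : Polynomial R} (hdeg : P.natDegree ≤ n)
    (hP : P.coeff 0 = 1) (h : ℤ → R) (Λ : Fin (n + 1) → ℕ) :
    ((jacobiTrudi h Λ).updateCol (Fin.last n)
      fun i => Polynomial.aeval (shift R) P h (Λ i + n - i)).det = (jacobiTrudi h Λ).det := by
  have hcol (i : Fin (n + 1)) : Polynomial.aeval (shift R) P h (Λ i + n - i) =
      ∑ j : Fin (n + 1), P.coeff j.rev • jacobiTrudi h Λ i j := by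
    rw [aeval_shift_apply hdeg, ← Equiv.sum_comp Fin.revPerm]
    refine Finset.sum_congr rfl fun j _ => ?_
    rw [Fin.revPerm_apply, smul_eq_mul, jacobiTrudi_apply]
    have hj : (j : ℕ) ≤ n := j.is_le
    congr 2
    rw [Fin.val_rev]
    lia
  simp only [hcol]
  rw [Matrix.det_updateCol_sum]
  simp [hP]

lemma sum_Icc_pow_mul_eq_sub {h g : ℤ → R} {y : R} (hg : ∀ m, h m = y * h (m - 1) + g m)
    {p q : ℕ} (hpq : p ≤ q) (z : ℤ) :
    ∑ m ∈ Finset.Icc p q, y ^ (q - m) * g (m + z) =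
      h (q + z) - y ^ (q - p + 1) * h (p + z - 1) := by
  induction q, hpq using Nat.le_induction with
  | base => simp [hg (p + z)]
  | succ q hpq ih =>
    have hstep : ∑ m ∈ Finset.Icc p q, y ^ (q + 1 - m) * g (m + z) =
        y * ∑ m ∈ Finset.Icc p q, y ^ (q - m) * g (m + z) := by
      rw [Finset.mul_sum]
      refine Finset.sum_congr rfl fun m hm => ?_
      rw [Nat.succ_sub (Finset.mem_Icc.1 hm).2, pow_succ', mul_assoc]
    have hrec : h ((q + 1 : ℕ) + z) = y * h (q + z) + g ((q + 1 : ℕ) + z) := by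
      rw [hg]
      push_cast
      ring_nf
    rw [Finset.sum_Icc_succ_top (by lia), hstep, ih, hrec, Nat.sub_self, Nat.sub_add_comm hpq]
    ring

lemma det_jacobiTrudi_eq_pow_mul_det_of_sum {h g : ℤ → R} {y : R}
    (hg : ∀ m, h m = y * h (m - 1) + g m) {P : Polynomial R} (hdeg : P.natDegree ≤ n)
    (hP : P.coeff 0 = 1) (hgeom : ∀ m : ℕ, Polynomial.aeval (shift R) P h m = y ^ m)
    {Λ : Fin (n + 1) → ℕ} (hΛ : Antitone Λ) :
    (jacobiTrudi h Λ).det = y ^ Λ (Fin.last n) *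
      (Matrix.of fun i j : Fin n => ∑ m ∈ Finset.Icc (Λ i.succ) (Λ i.castSucc),
        y ^ (Λ i.castSucc - m) * g (m + j - i)).det := by
  have hle (i : Fin n) : Λ i.succ ≤ Λ i.castSucc := hΛ i.castSucc_le_succ
  have hcol (i : Fin (n + 1)) :
      Polynomial.aeval (shift R) P h (Λ i + n - i) = y ^ (Λ i + (n - i)) := by
    have hi : (i : ℕ) ≤ n := i.is_le
    rw [← hgeom, show (Λ i + n - i : ℤ) = (Λ i + (n - i) : ℕ) by lia]
  have hne (j : Fin n) : j.castSucc ≠ Fin.last n := j.castSucc_ne_last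
  rw [← det_updateCol_last_jacobiTrudi_aeval_shift hdeg hP,
    det_eq_mul_det_of_last_col_eq_mul_succ _ fun i => y ^ (Λ i.castSucc - Λ i.succ + 1)]
  · congr 2
    · simp [hcol]
    · ext i j
      simp only [add_sub_assoc, Matrix.of_apply, sum_Icc_pow_mul_eq_sub hg (hle i),
        Matrix.updateCol_ne (hne j), jacobiTrudi_apply, Fin.val_castSucc, Fin.val_succ]
      congr 3
      lia
  · intro i
    simp only [Matrix.updateCol_self, hcol, ← pow_add, Fin.val_castSucc, Fin.val_succ]
    congr 1
    have := hle i
    lia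

lemma det_of_pow_mul_jacobiTrudi (y : R) (g : ℤ → R) (Λ M : Fin n → ℕ) (hM : M ≤ Λ) :
    (Matrix.of fun i j : Fin n => y ^ (Λ i - M i) * g (M i + j - i)).det =
      y ^ (∑ i, Λ i - ∑ i, M i) * (jacobiTrudi g M).det := by
  rw [← Finset.sum_tsub_distrib _ fun i _ => hM i, ← Finset.prod_pow_eq_pow_sum]
  exact Matrix.det_mul_column (fun i => y ^ (Λ i - M i)) (jacobiTrudi g M)

theorem det_jacobiTrudi_eq_sum_Icc {h g : ℤ → R} {y : R}
    (hg : ∀ m, h m = y * h (m - 1) + g m) {P : Polynomial R} (hdeg : P.natDegree ≤ n)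
    (hP : P.coeff 0 = 1) (hgeom : ∀ m : ℕ, Polynomial.aeval (shift R) P h m = y ^ m)
    {Λ : Fin (n + 1) → ℕ} (hΛ : Antitone Λ) :
    (jacobiTrudi h Λ).det =
      ∑ M ∈ Finset.Icc (fun i : Fin n => Λ i.succ) (fun i : Fin n => Λ i.castSucc),
        y ^ ((∑ i, Λ i) - ∑ i, M i) * (jacobiTrudi g M).det := by
  rw [det_jacobiTrudi_eq_pow_mul_det_of_sum hg hdeg hP hgeom hΛ, det_of_sum_row,
    ← Pi.Icc_eq, Finset.mul_sum]
  refine Finset.sum_congr rfl fun M hM => ?_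
  have hle : M ≤ fun i => Λ i.castSucc := (Finset.mem_Icc.1 hM).2
  have hsum : ∑ i, M i ≤ ∑ i : Fin n, Λ i.castSucc := Finset.sum_le_sum fun i _ => hle i
  rw [det_of_pow_mul_jacobiTrudi y g _ M hle, ← mul_assoc, ← pow_add, Fin.sum_univ_castSucc,
    Nat.sub_add_comm hsum, add_comm]

end JacobiTrudi

section CompleteHomogeneous

variable {N : ℕ} {S : Finset (Fin N)} {a : Fin N}

lemma hCompl_eq_sum_piAntidiag (S : Finset (Fin N)) (k : ℕ) :
    hCompl N S k = ∑ d ∈ S.piAntidiag k, ∏ i, X i ^ d i := by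
  refine Finset.sum_congr (Finset.ext fun d => ?_) fun _ _ => rfl
  simp only [Finset.mem_filter, Finset.mem_Icc, Finset.mem_piAntidiag]
  constructor
  · rintro ⟨⟨-, hd⟩, hsum⟩
    have hsupp (i) (hi : d i ≠ 0) : i ∈ S := by
      by_contra h
      exact hi (by simpa [h] using hd i)
    exact ⟨hsum ▸ Finset.sum_subset S.subset_univ fun i _ => not_imp_comm.1 (hsupp i), hsupp⟩
  · rintro ⟨hsum, hsupp⟩
    refine ⟨⟨fun i => Nat.zero_le _, fun i => ?_⟩, ?_⟩
    · dsimp only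
      split_ifs with hi
      · exact hsum ▸ Finset.single_le_sum_of_canonicallyOrdered hi
      · exact (not_imp_comm.1 (hsupp i) hi).le
    · exact hsum ▸ (Finset.sum_subset S.subset_univ fun i _ => not_imp_comm.1 (hsupp i)).symm

lemma hCompl_insert (ha : a ∉ S) (k : ℕ) :
    hCompl N (insert a S) k =
      ∑ p ∈ Finset.HasAntidiagonal.antidiagonal k, X a ^ p.1 * hCompl N S p.2 := by
  simp only [hCompl_eq_sum_piAntidiag, ← Finset.cons_eq_insert a S ha, Finset.piAntidiag_cons,
    Finset.sum_disjiUnion, Finset.sum_map, Finset.mul_sum]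
  refine Finset.sum_congr rfl fun p _ => Finset.sum_congr rfl fun d _ => ?_
  simp only [addRightEmbedding_apply, Pi.add_apply, pow_add, Finset.prod_mul_distrib, pow_ite,
    pow_zero]
  simp [mul_comm]

lemma hCompl_insert_succ (ha : a ∉ S) (k : ℕ) :
    hCompl N (insert a S) (k + 1) = X a * hCompl N (insert a S) k + hCompl N S (k + 1) := by
  simp only [hCompl_insert ha, Finset.Nat.sum_antidiagonal_succ, Finset.mul_sum, pow_succ']
  simp [mul_assoc, add_comm]

lemma hComplZ_natCast (S : Finset (Fin N)) (m : ℕ) : hComplZ N S m = hCompl N S m := by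
  simp [hComplZ]

lemma hComplZ_of_neg (S : Finset (Fin N)) {m : ℤ} (hm : m < 0) : hComplZ N S m = 0 := by
  simp [hComplZ, hm]

lemma hComplZ_insert (ha : a ∉ S) (m : ℤ) :
    hComplZ N (insert a S) m = X a * hComplZ N (insert a S) (m - 1) + hComplZ N S m := by
  obtain hm | hm := lt_or_ge m 0
  · simp [hComplZ_of_neg, hm, show m - 1 < 0 by lia]
  · lift m to ℕ using hm
    cases m with
    | zero => simp [hComplZ, hCompl_insert ha]
    | succ k =>
      rw [hComplZ_natCast, hComplZ_natCast, hCompl_insert_succ ha, Nat.cast_succ,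
        add_sub_cancel_right, hComplZ_natCast]

lemma hCompl_empty (k : ℕ) : hCompl N ∅ k = if k = 0 then 1 else 0 := by
  rw [hCompl_eq_sum_piAntidiag, Finset.piAntidiag_empty]
  split_ifs <;> simp

lemma hComplZ_singleton (a : Fin N) (m : ℕ) : hComplZ N {a} m = X a ^ m := by
  rw [hComplZ_natCast, ← insert_empty_eq]
  induction m with
  | zero =>
    rw [hCompl_insert (Finset.notMem_empty a)]
    simp [hCompl_empty]
  | succ k ih =>
    rw [hCompl_insert_succ (Finset.notMem_empty a), ih, hCompl_empty, if_neg k.succ_ne_zero,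
      add_zero, pow_succ']

/-- The generating polynomial `∏ i ∈ S, (1 - xᵢ t) = ∑ k, (-1) ^ k e_k t ^ k` of the signed
elementary symmetric polynomials, the inverse of the generating series of the `hCompl N S k`. -/
def elemGen (S : Finset (Fin N)) : Polynomial (MvPolynomial (Fin N) ℚ) :=
  ∏ i ∈ S, (1 - Polynomial.C (X i) * Polynomial.X)

lemma natDegree_elemGen_le (S : Finset (Fin N)) : (elemGen S).natDegree ≤ S.card := by
  refine (Polynomial.natDegree_prod_le _ _).trans ?_
  refine (Finset.sum_le_card_nsmul _ _ 1 fun i _ => ?_).trans (by simp)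
  compute_degree

lemma coeff_zero_elemGen (S : Finset (Fin N)) : (elemGen S).coeff 0 = 1 := by
  simp [elemGen, Polynomial.coeff_zero_prod]

lemma aeval_shift_one_sub_hComplZ_insert (ha : a ∉ S) :
    Polynomial.aeval (shift (MvPolynomial (Fin N) ℚ))
      (1 - Polynomial.C (X a : MvPolynomial (Fin N) ℚ) * Polynomial.X)
      (hComplZ N (insert a S)) = hComplZ N S := by
  funext m
  rw [aeval_shift_one_sub_C_mul_X_apply, hComplZ_insert ha, add_sub_cancel_left]

lemma aeval_shift_elemGen_hComplZ_union {T : Finset (Fin N)} (hST : Disjoint S T) :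
    Polynomial.aeval (shift _) (elemGen S) (hComplZ N (S ∪ T)) = hComplZ N T := by
  induction S using Finset.induction_on with
  | empty => simp [elemGen]
  | insert a S ha ih =>
    rw [Finset.disjoint_insert_left] at hST
    rw [elemGen, Finset.prod_insert ha, mul_comm, map_mul, Module.End.mul_apply,
      Finset.insert_union, aeval_shift_one_sub_hComplZ_insert (by simp [ha, hST.1])]
    exact ih hST.2

end CompleteHomogeneous

lemma insert_last_filter_val_lt (n : ℕ) :
    insert (Fin.last n) (Finset.univ.filter fun i : Fin (n + 1) => (i : ℕ) < n) =
      Finset.univ := by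
  ext i
  simp only [Finset.mem_insert, Finset.mem_filter, Finset.mem_univ, true_and, iff_true,
    Fin.ext_iff, Fin.val_last]
  lia

theorem stmt1_general {N n : ℕ} {S : Finset (Fin N)} {a : Fin N} (ha : a ∉ S) (hS : S.card ≤ n)
    {Λ : Fin (n + 1) → ℕ} (hΛ : Antitone Λ) :
    schurJT N (insert a S) Λ =
      ∑ M ∈ Finset.Icc (fun i : Fin n => Λ i.succ) (fun i : Fin n => Λ i.castSucc),
        X a ^ ((∑ i, Λ i) - ∑ i, M i) * schurJT N S M := by
  have hgeom (m : ℕ) :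
      Polynomial.aeval (shift _) (elemGen S) (hComplZ N (insert a S)) m = X a ^ m := by
    rw [← Finset.union_singleton, aeval_shift_elemGen_hComplZ_union (by simpa using ha),
      hComplZ_singleton]
  exact det_jacobiTrudi_eq_sum_Icc (hComplZ_insert ha) ((natDegree_elemGen_le S).trans hS)
    (coeff_zero_elemGen S) hgeom hΛ

theorem stmt1 (n : ℕ) (Λ : Fin (n + 1) → ℕ) (hΛ : Antitone Λ) :
    schurJT (n + 1) Finset.univ Λ =
      ∑ M ∈ Finset.Icc (fun i : Fin n => Λ i.succ) (fun i : Fin n => Λ i.castSucc),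
        X (Fin.last n) ^ ((∑ i, Λ i) - ∑ i, M i) *
          schurJT (n + 1) (Finset.univ.filter fun i : Fin (n + 1) => (i : ℕ) < n) M :=
  (congrArg (schurJT (n + 1) · Λ) (insert_last_filter_val_lt n).symm).trans
    (stmt1_general (by simp) (by simp [Fin.card_filter_val_lt]) hΛ)
end
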